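/- Let α = 1/2, define Q : [0,∞) → ℝ by Q(t) = 1000 for t ∈ [0,1000] and Q(t) = 1000²/t for t ≥ 1000, and let g(t) = 1/(1 + t^{1/2}). Then for every x₀ ∈ ℝ, the unique solution φ ∈ C⁰_{1/2}([0,∞), ℝ) of the integral equation φ(t) = t^{-1/2} E_{1/2,1/2}(-t^{1/2}) x₀ + ∫₀^t (t-τ)^{-1/2} E_{1/2,1/2}(-(t-τ)^{1/2}) ( Q(τ) φ(τ) + g(τ) ) dτ (the variation-of-constants form of D^{1/2}_{0+} x = -x + Q(t)x + g(t) with lim_{t→0⁺} t^{1/2} x(t) = x₀) satisfies lim_{t→∞} φ(t) = 0. -/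

import Mathlib

open Filter Topology MeasureTheory

/-- The scalar Mittag-Leffler function `E_{α,β}(z) = ∑ zᵏ / Γ(αk + β)`. -/
noncomputable def mlScalar (α β z : ℝ) : ℝ :=
  ∑' k : ℕ, z ^ k / Real.Gamma (α * k + β)

/-- Membership in `C⁰_{1/2}([0,∞), ℝ)`: continuous on `(0,∞)`, the limit
`lim_{t→0⁺} t^{1/2} x(t)` exists, and `sup_{t≥0} t^{1/2} |x(t)| < ∞`. -/
def memC0half (x : ℝ → ℝ) : Prop :=
  ContinuousOn x (Set.Ioi 0) ∧
  (∃ l : ℝ, Tendsto (fun t : ℝ => t ^ ((1:ℝ)/2) * x t) (𝓝[>] 0) (𝓝 l)) ∧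
  (∃ C : ℝ, ∀ t : ℝ, 0 ≤ t → t ^ ((1:ℝ)/2) * |x t| ≤ C)

/-- `Q(t) = 1000` for `t ∈ [0,1000]` and `Q(t) = 1000²/t` for `t ≥ 1000`. -/
noncomputable def Qex (t : ℝ) : ℝ := if t ≤ 1000 then 1000 else 1000 ^ 2 / t

lemma HasSum.congr_fun' {f g : ℕ → ℝ} {a : ℝ} (h : HasSum f a) (hfg : ∀ n, g n = f n) : HasSum g a := by
  rwa [show g = f from funext hfg]

lemma gm_succ (n : ℕ) : Real.Gamma (((n+1:ℕ):ℝ) + 1/2) = ((n:ℝ)+1/2) * Real.Gamma ((n:ℝ)+1/2) := by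
  have := Real.Gamma_add_one (s := (n:ℝ)+1/2) (by positivity)
  rw [← this]; congr 1; push_cast; ring

lemma gm_pos (n : ℕ) : 0 < Real.Gamma ((n:ℝ)+1/2) := Real.Gamma_pos_of_pos (by positivity)

lemma gm_summable (t : ℝ) (ht : 0 < t) : Summable (fun n : ℕ => t^n / Real.Gamma ((n:ℝ)+1/2)) := by
  refine summable_of_ratio_test_tendsto_lt_one (l := 0) (by norm_num) ?_ ?_
  · refine Eventually.of_forall fun n => ?_
    have := gm_pos n
    positivity
  · have h : (fun n : ℕ => ‖t^(n+1) / Real.Gamma (((n+1:ℕ):ℝ)+1/2)‖ / ‖t^n / Real.Gamma ((n:ℝ)+1/2)‖)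
        = fun n : ℕ => t / ((n:ℝ) + 1/2) := by
      funext n
      have h1 := gm_pos n
      rw [gm_succ, Real.norm_of_nonneg (by positivity), Real.norm_of_nonneg (by positivity)]
      field_simp
      try ring
    rw [h]
    refine Tendsto.const_div_atTop ?_ t
    exact tendsto_atTop_add_const_right _ _ tendsto_natCast_atTop_atTop

/-- normalized incomplete gamma -/
noncomputable def Jg (n : ℕ) (t : ℝ) : ℝ :=
  ∫ s in (0:ℝ)..t, Real.exp (-s) * s ^ ((n:ℝ) - 1/2) / Real.Gamma ((n:ℝ)+1/2)

lemma Jg_int (n : ℕ) (a b : ℝ) : IntervalIntegrable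
    (fun s : ℝ => Real.exp (-s) * s ^ ((n:ℝ) - 1/2) / Real.Gamma ((n:ℝ)+1/2)) volume a b := by
  have h : IntervalIntegrable (fun s : ℝ => s ^ ((n:ℝ) - 1/2)) volume a b :=
    intervalIntegral.intervalIntegrable_rpow' (by have : (0:ℝ) ≤ n := n.cast_nonneg; linarith)
  exact (h.continuousOn_mul (by fun_prop)).div_const _

lemma Jg_rec (n : ℕ) (t : ℝ) (ht : 0 < t) :
    Jg n t = Jg (n+1) t + Real.exp (-t) * t ^ ((n:ℝ) + 1/2) / Real.Gamma (((n+1:ℕ):ℝ)+1/2) := by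
  have hn : (0:ℝ) ≤ n := n.cast_nonneg
  have key := intervalIntegral.integral_eq_sub_of_hasDerivAt_of_le (a := 0) (b := t)
    (f := fun s : ℝ => Real.exp (-s) * s ^ ((n:ℝ) + 1/2) / Real.Gamma (((n+1:ℕ):ℝ)+1/2))
    (f' := fun s : ℝ => Real.exp (-s) * s ^ ((n:ℝ) - 1/2) / Real.Gamma ((n:ℝ)+1/2)
      - Real.exp (-s) * s ^ (((n+1:ℕ):ℝ) - 1/2) / Real.Gamma (((n+1:ℕ):ℝ)+1/2)) ht.le ?_ ?_ ?_
  · rw [intervalIntegral.integral_sub (Jg_int n _ _) (Jg_int (n+1) _ _)] at key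
    rw [Real.zero_rpow (by positivity)] at key
    simp only [mul_zero, zero_div, sub_zero] at key
    unfold Jg; linarith
  · refine Continuous.continuousOn ?_
    have : Continuous fun s : ℝ => s ^ ((n:ℝ)+1/2) := Real.continuous_rpow_const (by positivity)
    fun_prop
  · intro x hx
    have h1 : HasDerivAt (fun s : ℝ => s ^ ((n:ℝ)+1/2)) (((n:ℝ)+1/2) * x ^ ((n:ℝ)+1/2-1)) x :=
      Real.hasDerivAt_rpow_const (Or.inl hx.1.ne')
    have h2 : HasDerivAt (fun s : ℝ => Real.exp (-s)) (Real.exp (-x) * (-1)) x :=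
      (hasDerivAt_neg x).exp
    refine HasDerivAt.congr_deriv ((h2.mul h1).div_const _) ?_
    rw [gm_succ]
    have := gm_pos n
    have e1 : ((n+1:ℕ):ℝ) - 1/2 = (n:ℝ)+1/2 := by push_cast; ring
    have e2 : (n:ℝ)+1/2-1 = (n:ℝ)-1/2 := by ring
    rw [e1, e2]
    field_simp
    ring
  · exact (Jg_int n _ _).sub (Jg_int (n+1) _ _)

lemma Jg_sum (n : ℕ) (t : ℝ) (ht : 0 < t) :
    ∑ m ∈ Finset.range n, t ^ ((m:ℝ) + 1/2) / Real.Gamma (((m+1:ℕ):ℝ)+1/2)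
      = Real.exp t * (Jg 0 t - Jg n t) := by
  induction n with
  | zero => simp
  | succ k ih =>
    rw [Finset.sum_range_succ, ih, Jg_rec k t ht, Real.exp_neg]
    field_simp
    ring

lemma Jg_tendsto (t : ℝ) (ht : 0 < t) : Tendsto (fun n => Jg n t) atTop (𝓝 0) := by
  have h0 := (gm_summable t ht).tendsto_atTop_zero
  have h1 := h0.mul_const (∫ s in (0:ℝ)..t, s ^ (-(1:ℝ)/2))
  rw [zero_mul] at h1
  refine squeeze_zero_norm (fun n => ?_) h1
  rw [← intervalIntegral.integral_const_mul]
  refine intervalIntegral.norm_integral_le_of_norm_le ht.le ?_ ?_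
  · refine Eventually.of_forall fun s hs => ?_
    have hs0 : 0 < s := hs.1
    have hg := gm_pos n
    rw [Real.norm_of_nonneg (by positivity)]
    have e : s ^ ((n:ℝ) - 1/2) = s ^ n * s ^ (-(1:ℝ)/2) := by
      rw [← Real.rpow_natCast, ← Real.rpow_add hs0]; congr 1; ring
    rw [e]
    have h2 : Real.exp (-s) ≤ 1 := Real.exp_le_one_iff.2 (by linarith)
    have h3 : s ^ n ≤ t ^ n := pow_le_pow_left₀ hs0.le hs.2 n
    rw [div_mul_eq_mul_div]
    refine div_le_div_of_nonneg_right ?_ hg.le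
    calc _ ≤ 1 * (s ^ n * s ^ (-(1:ℝ)/2)) := mul_le_mul_of_nonneg_right h2 (by positivity)
      _ ≤ _ := by rw [one_mul]; exact mul_le_mul_of_nonneg_right h3 (by positivity)
  · exact (intervalIntegral.intervalIntegrable_rpow' (by norm_num)).const_mul _

lemma Jg_hasSum (t : ℝ) (ht : 0 < t) :
    HasSum (fun m : ℕ => t ^ ((m:ℝ) + 1/2) / Real.Gamma (((m+1:ℕ):ℝ)+1/2)) (Real.exp t * Jg 0 t) := by
  rw [hasSum_iff_tendsto_nat_of_nonneg]
  · simp_rw [Jg_sum _ t ht]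
    simpa using ((Jg_tendsto t ht).const_sub (Jg 0 t)).const_mul (Real.exp t)
  · intro m
    have := gm_pos (m+1)
    positivity

noncomputable def eML (s : ℝ) : ℝ := mlScalar (1/2) (1/2) (-√s)

lemma eML_of_nonpos (t : ℝ) (ht : t ≤ 0) : eML t = 1 / √Real.pi := by
  unfold eML mlScalar
  rw [Real.sqrt_eq_zero_of_nonpos ht, tsum_eq_single 0]
  · norm_num [Real.Gamma_one_half_eq]
  · intro k hk; simp [hk]

lemma eML_even (t : ℝ) (ht : 0 < t) :
    HasSum (fun k : ℕ => (-√t) ^ (2*k) / Real.Gamma (1/2 * ((2*k : ℕ):ℝ) + 1/2))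
      (1 / √Real.pi + √t * (Real.exp t * Jg 0 t)) := by
  have h1 := ((Jg_hasSum t ht).mul_left √t)
  have h2 : HasSum (fun m : ℕ => t ^ (m+1) / Real.Gamma (((m+1:ℕ):ℝ)+1/2)) (√t * (Real.exp t * Jg 0 t)) := by
    refine h1.congr_fun' fun m => ?_
    rw [Real.sqrt_eq_rpow, ← mul_div_assoc, ← Real.rpow_add ht, ← Real.rpow_natCast]
    congr 2; push_cast; ring
  have h3 := (hasSum_nat_add_iff (f := fun m : ℕ => t ^ m / Real.Gamma ((m:ℝ)+1/2)) 1).1 h2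
  have h4 : √t * (Real.exp t * Jg 0 t) + ∑ i ∈ Finset.range 1, t ^ i / Real.Gamma ((i:ℝ) + 1/2)
      = 1 / √Real.pi + √t * (Real.exp t * Jg 0 t) := by
    rw [← Real.Gamma_one_half_eq, Finset.sum_range_one, pow_zero, Nat.cast_zero, zero_add, add_comm]
  rw [h4] at h3
  refine h3.congr_fun' fun k => ?_
  rw [pow_mul, neg_sq, Real.sq_sqrt ht.le]
  congr 2; push_cast; ring

lemma eML_odd (t : ℝ) (ht : 0 < t) :
    HasSum (fun k : ℕ => (-√t) ^ (2*k+1) / Real.Gamma (1/2 * ((2*k+1 : ℕ):ℝ) + 1/2))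
      (- √t * Real.exp t) := by
  have h0 : HasSum (fun k : ℕ => t ^ k / (k.factorial : ℝ)) (Real.exp t) := by
    rw [Real.exp_eq_exp_ℝ]; exact NormedSpace.expSeries_div_hasSum_exp t
  refine (h0.mul_left (-√t)).congr_fun' fun k => ?_
  rw [pow_succ, pow_mul, neg_sq, Real.sq_sqrt ht.le]
  have : (1/2 * ((2*k+1 : ℕ):ℝ) + 1/2) = (k:ℝ) + 1 := by push_cast; ring
  rw [this, Real.Gamma_nat_eq_factorial]; ring

lemma eML_pos (t : ℝ) (ht : 0 < t) :
    eML t = 1 / √Real.pi - √t * Real.exp t * (1 - Jg 0 t) := by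
  have h := HasSum.even_add_odd (f := fun k : ℕ => (-√t) ^ k / Real.Gamma (1/2 * (k:ℝ) + 1/2))
    (eML_even t ht) (eML_odd t ht)
  have h2 : eML t = 1 / √Real.pi + √t * (Real.exp t * Jg 0 t) + (- √t * Real.exp t) := h.tsum_eq
  rw [h2]; ring

lemma Jg_nonpos_cont : Continuous (fun t => Jg 0 t) :=
  intervalIntegral.continuous_primitive (fun a b => Jg_int 0 a b) 0

lemma eML_cont : Continuous eML := by
  have h : eML = fun t => 1 / √Real.pi - √t * Real.exp t * (1 - Jg 0 t) := by
    funext t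
    rcases le_or_gt t 0 with ht | ht
    · rw [eML_of_nonpos t ht, Real.sqrt_eq_zero_of_nonpos ht]; simp
    · exact eML_pos t ht
  rw [h]
  have := Jg_nonpos_cont
  fun_prop

lemma sqrtpi_gt : 1 ≤ √Real.pi := by
  rw [Real.one_le_sqrt]; linarith [Real.pi_gt_three]

noncomputable def Rg (t : ℝ) : ℝ := ∫ s in Set.Ioi t, Real.exp (-s) * s ^ (-(1:ℝ)/2)

lemma Rg_int (t : ℝ) (ht : 0 ≤ t) :
    IntegrableOn (fun s : ℝ => Real.exp (-s) * s ^ (-(1:ℝ)/2)) (Set.Ioi t) := by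
  have := Real.GammaIntegral_convergent (s := 1/2) (by norm_num)
  have h2 : IntegrableOn (fun s : ℝ => Real.exp (-s) * s ^ (-(1:ℝ)/2)) (Set.Ioi 0) := by
    convert this using 4; norm_num
  exact h2.mono_set (Set.Ioi_subset_Ioi ht)

lemma Rg_eq (t : ℝ) (ht : 0 < t) : Rg t = √Real.pi * (1 - Jg 0 t) := by
  have h := intervalIntegral.integral_interval_add_Ioi (Rg_int 0 le_rfl) (Rg_int t ht.le)
  have h2 : ∫ s in Set.Ioi (0:ℝ), Real.exp (-s) * s ^ (-(1:ℝ)/2) = √Real.pi := by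
    rw [← Real.Gamma_one_half_eq, Real.Gamma_eq_integral (by norm_num)]
    norm_num
  have h3 : √Real.pi * Jg 0 t = ∫ s in (0:ℝ)..t, Real.exp (-s) * s ^ (-(1:ℝ)/2) := by
    unfold Jg
    rw [← intervalIntegral.integral_const_mul]
    congr 1; funext s
    have : √Real.pi ≠ 0 := by linarith [sqrtpi_gt]
    have e : ((0:ℕ):ℝ) + 1/2 = 1/2 := by norm_num
    have e' : ((0:ℕ):ℝ) - 1/2 = -1/2 := by norm_num
    rw [e, e', Real.Gamma_one_half_eq]
    field_simp
  rw [h2, ← h3] at h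
  unfold Rg; linarith

lemma Rg_bounds (t : ℝ) (ht : 0 < t) :
    √t * Real.exp t * Rg t ≤ 1 ∧ 1 ≤ (1 + 1/(2*t)) * (√t * Real.exp t * Rg t) := by
  have hd : ∀ x ∈ Set.Ioi t, HasDerivAt (fun s : ℝ => -(Real.exp (-s) * s ^ (-(1:ℝ)/2)))
      (Real.exp (-x) * x ^ (-(1:ℝ)/2) * (1 + 1/(2*x))) x := by
    intro x hx
    have hx0 : 0 < x := ht.trans hx
    have h1 : HasDerivAt (fun s : ℝ => s ^ (-(1:ℝ)/2)) ((-(1:ℝ)/2) * x ^ (-(1:ℝ)/2-1)) x :=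
      Real.hasDerivAt_rpow_const (Or.inl hx0.ne')
    have h2 : HasDerivAt (fun s : ℝ => Real.exp (-s)) (Real.exp (-x) * (-1)) x :=
      (hasDerivAt_neg x).exp
    refine HasDerivAt.congr_deriv ((h2.mul h1).neg) ?_
    rw [Real.rpow_sub_one hx0.ne']
    field_simp
    ring
  have hint : IntegrableOn (fun x : ℝ => Real.exp (-x) * x ^ (-(1:ℝ)/2) * (1 + 1/(2*x))) (Set.Ioi t) := by
    refine Integrable.mono' ((Rg_int t ht.le).mul_const (1+1/(2*t))) ?_ ?_
    · exact (by fun_prop : Measurable _).aestronglyMeasurable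
    · refine (ae_restrict_iff' measurableSet_Ioi).2 (Eventually.of_forall fun x hx => ?_)
      have hx0 : 0 < x := ht.trans hx
      have hx1 : t ≤ x := le_of_lt hx
      rw [Real.norm_of_nonneg (by positivity)]
      gcongr
  have hlim : Tendsto (fun s : ℝ => -(Real.exp (-s) * s ^ (-(1:ℝ)/2))) atTop (𝓝 0) := by
    have h1 := Real.tendsto_exp_neg_atTop_nhds_zero
    have h2 : Tendsto (fun s : ℝ => s ^ (-(1:ℝ)/2)) atTop (𝓝 0) := by
      have := tendsto_rpow_neg_atTop (y := 1/2) (by norm_num)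
      convert this using 3; norm_num
    simpa using (h1.mul h2).neg
  have hI := integral_Ioi_of_hasDerivAt_of_tendsto (a := t) ?_ hd hint hlim
  swap
  · refine ContinuousAt.continuousWithinAt ?_
    have : ContinuousAt (fun s : ℝ => s ^ (-(1:ℝ)/2)) t := Real.continuousAt_rpow_const _ _ (Or.inl ht.ne')
    fun_prop
  have hup : Rg t ≤ Real.exp (-t) * t ^ (-(1:ℝ)/2) := by
    have : Rg t ≤ ∫ x in Set.Ioi t, Real.exp (-x) * x ^ (-(1:ℝ)/2) * (1 + 1/(2*x)) := by
      refine setIntegral_mono_on (Rg_int t ht.le) hint measurableSet_Ioi fun x hx => ?_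
      have hx0 : 0 < x := ht.trans hx
      refine le_mul_of_one_le_right (by positivity) ?_
      have : 0 < 1/(2*x) := by positivity
      linarith
    rw [hI] at this; linarith
  have hlo : Real.exp (-t) * t ^ (-(1:ℝ)/2) ≤ (1 + 1/(2*t)) * Rg t := by
    have : ∫ x in Set.Ioi t, Real.exp (-x) * x ^ (-(1:ℝ)/2) * (1 + 1/(2*x)) ≤ (1 + 1/(2*t)) * Rg t := by
      rw [mul_comm, Rg, ← integral_mul_const]
      refine setIntegral_mono_on hint ((Rg_int t ht.le).mul_const _) measurableSet_Ioi fun x hx => ?_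
      have hx0 : 0 < x := ht.trans hx
      have hx1 : t ≤ x := le_of_lt hx
      gcongr
    rw [hI] at this; linarith
  have hone : √t * Real.exp t * (Real.exp (-t) * t ^ (-(1:ℝ)/2)) = 1 := by
    have : √t * t ^ (-(1:ℝ)/2) = 1 := by
      rw [Real.sqrt_eq_rpow, ← Real.rpow_add ht]; norm_num
    have h' : Real.exp t * Real.exp (-t) = 1 := by rw [← Real.exp_add]; simp
    calc _ = (√t * t ^ (-(1:ℝ)/2)) * (Real.exp t * Real.exp (-t)) := by ring
      _ = 1 := by rw [this, h', one_mul]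
  have hp : 0 < √t * Real.exp t := by positivity
  constructor
  · rw [← hone]; gcongr
  · calc 1 = √t * Real.exp t * (Real.exp (-t) * t ^ (-(1:ℝ)/2)) := hone.symm
      _ ≤ √t * Real.exp t * ((1 + 1/(2*t)) * Rg t) := by gcongr
      _ = _ := by ring

lemma eML_bound (t : ℝ) (ht : 0 < t) : |eML t| ≤ 1/(1+t) := by
  obtain ⟨h1, h2⟩ := Rg_bounds t ht
  have hs := sqrtpi_gt
  have e : eML t = (1 - √t * Real.exp t * Rg t) / √Real.pi := by
    rw [eML_pos t ht, Rg_eq t ht]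
    have : √Real.pi ≠ 0 := by linarith
    field_simp
  set X := √t * Real.exp t * Rg t
  rw [e, abs_of_nonneg (div_nonneg (by linarith) (by linarith))]
  have h3 : 2*t ≤ (2*t+1)*X := by
    have : (1 + 1/(2*t)) * X = (2*t+1)*X/(2*t) := by field_simp
    rw [this, le_div_iff₀ (by positivity)] at h2
    linarith
  have h5 : (1 - X) * (1+t) ≤ 1 := by nlinarith
  have h4 : 1 - X ≤ 1/(1+t) := by
    rw [le_div_iff₀ (by positivity)]; exact h5
  refine le_trans (div_le_self (by linarith) hs) h4

lemma eML_bound1 (t : ℝ) : |eML t| ≤ 1 := by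
  have hs := sqrtpi_gt
  rcases le_or_gt t 0 with ht | ht
  · rw [eML_of_nonpos t ht, abs_of_nonneg (by positivity)]
    rw [div_le_one (by linarith)]; exact hs
  · refine (eML_bound t ht).trans ?_
    rw [div_le_one (by linarith)]; linarith

noncomputable def hk (a u : ℝ) : ℝ := u ^ (-a) / (1 + u)

lemma hk_nonneg (a u : ℝ) (hu : 0 ≤ u) : 0 ≤ hk a u := by unfold hk; positivity

lemma hk_meas (a : ℝ) : Measurable (hk a) := by unfold hk; fun_prop

lemma hk_int (a : ℝ) (ha : 0 < a) (ha1 : a < 1) : IntegrableOn (hk a) (Set.Ioi 0) := by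
  rw [← Set.Ioc_union_Ioi_eq_Ioi (zero_le_one' ℝ)]
  refine IntegrableOn.union ?_ ?_
  · have h1 : IntegrableOn (fun u : ℝ => u ^ (-a)) (Set.Ioc 0 1) :=
      (intervalIntegrable_iff_integrableOn_Ioc_of_le zero_le_one).1
        (intervalIntegral.intervalIntegrable_rpow' (by linarith))
    refine Integrable.mono' h1 (hk_meas a).aestronglyMeasurable ?_
    refine (ae_restrict_iff' measurableSet_Ioc).2 (Eventually.of_forall fun x hx => ?_)
    have hx0 : 0 < x := hx.1
    rw [Real.norm_of_nonneg (hk_nonneg a x hx0.le)]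
    exact div_le_self (by positivity) (by linarith)
  · have h1 : IntegrableOn (fun u : ℝ => u ^ (-a-1)) (Set.Ioi 1) :=
      integrableOn_Ioi_rpow_of_lt (by linarith) one_pos
    refine Integrable.mono' h1 (hk_meas a).aestronglyMeasurable ?_
    refine (ae_restrict_iff' measurableSet_Ioi).2 (Eventually.of_forall fun x hx => ?_)
    have hx0 : 0 < x := lt_trans one_pos hx
    rw [Real.norm_of_nonneg (hk_nonneg a x hx0.le), Real.rpow_sub_one hx0.ne']
    exact div_le_div_of_nonneg_left (by positivity) hx0 (by linarith)

noncomputable def Mk (a : ℝ) : ℝ := ∫ u in Set.Ioi (0:ℝ), hk a u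

lemma Mk_nonneg (a : ℝ) : 0 ≤ Mk a :=
  setIntegral_nonneg measurableSet_Ioi fun u hu => hk_nonneg a u (le_of_lt hu)

lemma hk_ii (a : ℝ) (ha : 0 < a) (ha1 : a < 1) (t : ℝ) (ht : 0 < t) :
    IntervalIntegrable (hk a) volume 0 t :=
  (intervalIntegrable_iff_integrableOn_Ioc_of_le ht.le).2
    ((hk_int a ha ha1).mono_set Set.Ioc_subset_Ioi_self)

lemma hk_ii' (a : ℝ) (ha : 0 < a) (ha1 : a < 1) (t : ℝ) (ht : 0 < t) :
    IntervalIntegrable (fun τ => hk a (t - τ)) volume 0 t := by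
  have := (hk_ii a ha ha1 t ht).comp_sub_left t
  simpa using this.symm

lemma hk_le (a : ℝ) (ha : 0 < a) (ha1 : a < 1) (t : ℝ) (ht : 0 < t) :
    ∫ u in (0:ℝ)..t, hk a u ≤ Mk a := by
  rw [intervalIntegral.integral_of_le ht.le]
  refine MeasureTheory.setIntegral_mono_set (hk_int a ha ha1) ?_ ?_
  · exact (ae_restrict_iff' measurableSet_Ioi).2 (Eventually.of_forall fun x hx => hk_nonneg a x (le_of_lt hx))
  · exact Eventually.of_forall Set.Ioc_subset_Ioi_self

lemma hk3_ii (a : ℝ) (ha : 0 < a) (ha1 : a < 1) (t : ℝ) (ht : 0 < t) :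
    IntervalIntegrable (fun τ => hk a τ + 2 * hk a (t - τ)) volume 0 t :=
  (hk_ii a ha ha1 t ht).add ((hk_ii' a ha ha1 t ht).const_mul 2)

lemma hk3_le (a : ℝ) (ha : 0 < a) (ha1 : a < 1) (t : ℝ) (ht : 0 < t) :
    ∫ τ in (0:ℝ)..t, (hk a τ + 2 * hk a (t - τ)) ≤ 3 * Mk a := by
  rw [intervalIntegral.integral_add (hk_ii a ha ha1 t ht) ((hk_ii' a ha ha1 t ht).const_mul 2),
    intervalIntegral.integral_const_mul, intervalIntegral.integral_comp_sub_left (hk a) t]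
  simp only [sub_self, sub_zero]
  linarith [hk_le a ha ha1 t ht]

lemma hk_pt (a : ℝ) (ha : 0 < a) (τ s : ℝ) (hτ : 0 < τ) (hs : 0 < s) :
    (τ ^ (-a) + s ^ (-a)) / (1 + s) ≤ hk a τ + 2 * hk a s := by
  have h1 : τ ^ (-a) / (1+s) ≤ hk a τ + hk a s := by
    rcases le_total τ s with h | h
    · have : τ ^ (-a) / (1+s) ≤ hk a τ :=
        div_le_div_of_nonneg_left (by positivity) (by linarith) (by linarith)
      linarith [hk_nonneg a s hs.le]
    · have : τ ^ (-a) / (1+s) ≤ hk a s :=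
        div_le_div_of_nonneg_right (Real.rpow_le_rpow_of_nonpos hs h (by linarith)) (by linarith)
      linarith [hk_nonneg a τ hτ.le]
  rw [add_div]
  have : s ^ (-a) / (1+s) = hk a s := rfl
  linarith

lemma sqrt_mul_rpow (x : ℝ) (hx : 0 < x) : √x * x ^ (-(1:ℝ)/2) = 1 := by
  rw [Real.sqrt_eq_rpow, ← Real.rpow_add hx]; norm_num

lemma ker_pt (τ s : ℝ) (hτ : 0 < τ) (hs : 0 < s) :
    √(τ + s) * (s ^ (-(1:ℝ)/2) * τ ^ (-(1:ℝ)/2)) ≤ τ ^ (-(1:ℝ)/2) + s ^ (-(1:ℝ)/2) := by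
  have h : √(τ+s) ≤ √τ + √s := by
    rw [Real.sqrt_le_left (by positivity)]
    nlinarith [Real.sq_sqrt hτ.le, Real.sq_sqrt hs.le, mul_nonneg (Real.sqrt_nonneg τ) (Real.sqrt_nonneg s)]
  calc _ ≤ (√τ + √s) * (s ^ (-(1:ℝ)/2) * τ ^ (-(1:ℝ)/2)) :=
        mul_le_mul_of_nonneg_right h (by positivity)
    _ = (√τ * τ ^ (-(1:ℝ)/2)) * s ^ (-(1:ℝ)/2) + (√s * s ^ (-(1:ℝ)/2)) * τ ^ (-(1:ℝ)/2) := by ring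
    _ = _ := by rw [sqrt_mul_rpow τ hτ, sqrt_mul_rpow s hs]; ring

lemma beta_ii : IntervalIntegrable
    (fun θ : ℝ => (1-θ) ^ (-(1:ℝ)/2) * θ ^ (-(1:ℝ)/2)) volume 0 1 := by
  have h1 : IntervalIntegrable (fun θ : ℝ => θ ^ (-(1:ℝ)/2)) volume 0 1 :=
    intervalIntegral.intervalIntegrable_rpow' (by norm_num)
  have h2 : IntervalIntegrable (fun θ : ℝ => (1-θ) ^ (-(1:ℝ)/2)) volume 0 1 := by
    have := h1.comp_sub_left 1
    simpa using this.symm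
  rw [intervalIntegrable_iff_integrableOn_Ioo_of_le zero_le_one] at *
  refine Integrable.mono' (h1.add h2) (by fun_prop : Measurable _).aestronglyMeasurable ?_
  refine (ae_restrict_iff' measurableSet_Ioo).2 (Eventually.of_forall fun x hx => ?_)
  have a1 : 0 < x := hx.1
  have a2 : 0 < 1 - x := by linarith [hx.2]
  rw [Real.norm_of_nonneg (by positivity)]
  have := ker_pt x (1-x) a1 a2
  simpa using this

noncomputable def VF (F : ℝ → ℝ) (t : ℝ) : ℝ :=
  √t * ∫ θ in (0:ℝ)..1, (1-θ) ^ (-(1:ℝ)/2) * θ ^ (-(1:ℝ)/2) * (eML (t*(1-θ)) * F (t*θ))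

lemma VF_ii (F : ℝ → ℝ) (hF : Continuous F) (C : ℝ) (hC : ∀ t, |F t| ≤ C) (t : ℝ) :
    IntervalIntegrable (fun θ : ℝ => (1-θ) ^ (-(1:ℝ)/2) * θ ^ (-(1:ℝ)/2) * (eML (t*(1-θ)) * F (t*θ)))
      volume 0 1 := by
  refine beta_ii.mul_continuousOn (Continuous.continuousOn ?_)
  have := eML_cont
  fun_prop

lemma VF_cont (F : ℝ → ℝ) (hF : Continuous F) (C : ℝ) (hC : ∀ t, |F t| ≤ C) : Continuous (VF F) := by
  have he := eML_cont
  unfold VF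
  refine Real.continuous_sqrt.mul ?_
  refine intervalIntegral.continuous_of_dominated_interval
    (bound := fun θ => |(1-θ) ^ (-(1:ℝ)/2) * θ ^ (-(1:ℝ)/2)| * C) ?_ ?_ ?_ ?_
  · intro t
    have := (VF_ii F hF C hC t).1.aestronglyMeasurable
    rwa [Set.uIoc_of_le zero_le_one]
  · intro t
    refine Eventually.of_forall fun θ _ => ?_
    rw [Real.norm_eq_abs, abs_mul, abs_mul (eML _)]
    refine mul_le_mul_of_nonneg_left ?_ (abs_nonneg _)
    calc |eML (t*(1-θ))| * |F (t*θ)| ≤ 1 * C := mul_le_mul (eML_bound1 _) (hC _) (abs_nonneg _) zero_le_one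
      _ = C := one_mul C
  · exact beta_ii.abs.mul_const C
  · exact Eventually.of_forall fun θ _ => by fun_prop

lemma VF_sub (F G : ℝ → ℝ) (hF : Continuous F) (hG : Continuous G) (C : ℝ) (hC : ∀ t, |F t| ≤ C)
    (D : ℝ) (hD : ∀ t, |G t| ≤ D) (t : ℝ) : VF F t - VF G t = VF (fun t => F t - G t) t := by
  unfold VF
  rw [← mul_sub, ← intervalIntegral.integral_sub (VF_ii F hF C hC t) (VF_ii G hG D hD t)]
  congr 2; funext θ; ring

lemma VF_eq (F : ℝ → ℝ) (t : ℝ) (ht : 0 < t) : VF F t =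
    √t * ∫ τ in (0:ℝ)..t, (t-τ) ^ (-(1:ℝ)/2) * eML (t-τ) * (τ ^ (-(1:ℝ)/2) * F τ) := by
  unfold VF
  congr 1
  have h := intervalIntegral.mul_integral_comp_mul_left (a := 0) (b := 1)
    (f := fun τ => (t-τ) ^ (-(1:ℝ)/2) * eML (t-τ) * (τ ^ (-(1:ℝ)/2) * F τ)) t
  rw [mul_zero, mul_one] at h
  rw [← h, ← intervalIntegral.integral_const_mul]
  refine intervalIntegral.integral_congr fun θ hθ => ?_
  rw [Set.uIcc_of_le zero_le_one] at hθ
  have e : t - t*θ = t*(1-θ) := by ring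
  simp only [e]
  rw [Real.mul_rpow ht.le (by linarith [hθ.2]), Real.mul_rpow ht.le hθ.1]
  have h2 : t * (t ^ (-(1:ℝ)/2) * t ^ (-(1:ℝ)/2)) = 1 := by
    rw [← Real.rpow_add ht]; norm_num [Real.rpow_neg_one]; field_simp
  linear_combination (-((1-θ) ^ (-(1:ℝ)/2) * θ ^ (-(1:ℝ)/2) * (eML (t*(1-θ)) * F (t*θ)))) * h2

/-- pointwise and integrated bound -/
lemma VF_bound (F G : ℝ → ℝ) (t : ℝ) (ht : 0 < t) (hG : IntervalIntegrable G volume 0 t)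
    (h : ∀ τ, 0 < τ → τ < t →
      (τ ^ (-(1:ℝ)/2) + (t-τ) ^ (-(1:ℝ)/2)) / (1 + (t-τ)) * |F τ| ≤ G τ) :
    |VF F t| ≤ ∫ τ in (0:ℝ)..t, G τ := by
  rw [VF_eq F t ht, ← intervalIntegral.integral_const_mul, ← Real.norm_eq_abs]
  refine intervalIntegral.norm_integral_le_of_norm_le ht.le ?_ hG
  have hne : ∀ᵐ τ : ℝ, τ ≠ t := by
    simp [ae_iff, measure_singleton]
  filter_upwards [hne] with τ hτt hτ
  have h0 : 0 < τ := hτ.1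
  have h1 : τ < t := lt_of_le_of_ne hτ.2 hτt
  have h2 : 0 < t - τ := by linarith
  refine le_trans ?_ (h τ h0 h1)
  have k := ker_pt τ (t-τ) h0 h2
  rw [add_sub_cancel] at k
  rw [Real.norm_eq_abs]
  have e : |√t * ((t-τ) ^ (-(1:ℝ)/2) * eML (t-τ) * (τ ^ (-(1:ℝ)/2) * F τ))|
      = (√t * ((t-τ) ^ (-(1:ℝ)/2) * τ ^ (-(1:ℝ)/2))) * |eML (t-τ)| * |F τ| := by
    simp only [abs_mul]
    rw [abs_of_nonneg (Real.sqrt_nonneg t), abs_of_nonneg (Real.rpow_nonneg h2.le _),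
      abs_of_nonneg (Real.rpow_nonneg h0.le _)]
    ring
  rw [e]
  refine mul_le_mul_of_nonneg_right ?_ (abs_nonneg _)
  rw [div_eq_mul_one_div (_ + _)]
  exact mul_le_mul k (eML_bound _ h2) (abs_nonneg _) (by positivity)

lemma VF_nonpos (F : ℝ → ℝ) (t : ℝ) (ht : t ≤ 0) : VF F t = 0 := by
  unfold VF; rw [Real.sqrt_eq_zero_of_nonpos ht, zero_mul]

lemma VF_bdd (F : ℝ → ℝ) (C : ℝ) (hC : ∀ t, |F t| ≤ C) (t : ℝ) : |VF F t| ≤ C * (3 * Mk (1/2)) := by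
  have hC0 : 0 ≤ C := (abs_nonneg _).trans (hC 0)
  rcases le_or_gt t 0 with ht | ht
  · rw [VF_nonpos F t ht, abs_zero]; have := Mk_nonneg (1/2); positivity
  have hi := hk3_ii (1/2) (by norm_num) (by norm_num) t ht
  refine (VF_bound F (fun τ => C * (hk (1/2) τ + 2 * hk (1/2) (t - τ))) t ht (hi.const_mul C) ?_).trans ?_
  · intro τ h0 h1
    have := hk_pt (1/2) (by norm_num) τ (t-τ) h0 (by linarith)
    have e : (-(1:ℝ)/2) = -(1/2) := by norm_num
    rw [e, mul_comm]
    exact mul_le_mul (hC τ) this (by have : 0 < t - τ := by linarith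
                                     positivity) hC0
  · rw [intervalIntegral.integral_const_mul]
    exact mul_le_mul_of_nonneg_left (hk3_le (1/2) (by norm_num) (by norm_num) t ht) hC0

noncomputable def w0 (L t : ℝ) : ℝ := Real.exp (-L / (1 + t))

lemma w0_deriv (L t : ℝ) (ht : 0 ≤ t) :
    HasDerivAt (w0 L) (L * (1 / (1+t)^2 * w0 L t)) t := by
  have h1 : HasDerivAt (fun s : ℝ => 1 + s) 1 t := (hasDerivAt_id t).const_add 1
  have hne : 1 + t ≠ 0 := by positivity
  have h2 : HasDerivAt (fun s : ℝ => -L / (1 + s)) (L / (1+t)^2) t := by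
    refine HasDerivAt.congr_deriv ((hasDerivAt_const t (-L)).div h1 hne) ?_
    ring
  refine HasDerivAt.congr_deriv h2.exp ?_
  unfold w0; ring

lemma w0_mono (L : ℝ) (hL : 0 < L) (τ t : ℝ) (h0 : 0 ≤ τ) (h : τ ≤ t) : w0 L τ ≤ w0 L t := by
  unfold w0
  apply Real.exp_le_exp.2
  rw [neg_div, neg_div]
  apply neg_le_neg
  exact div_le_div_of_nonneg_left hL.le (by linarith) (by linarith)

lemma w0_ii (L t : ℝ) (ht : 0 < t) :
    IntervalIntegrable (fun τ => 1 / (1+τ)^2 * w0 L τ) volume 0 t := by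
  apply ContinuousOn.intervalIntegrable
  rw [Set.uIcc_of_le ht.le]
  unfold w0
  have : ∀ x ∈ Set.Icc 0 t, 1 + x ≠ 0 := fun x hx => by have := hx.1; positivity
  refine ContinuousOn.mul (continuousOn_const.div (by fun_prop) fun x hx => pow_ne_zero 2 (this x hx)) ?_
  exact Real.continuous_exp.comp_continuousOn (continuousOn_const.div (by fun_prop) this)

lemma w0_integral (L t : ℝ) (hL : 0 < L) (ht : 0 < t) :
    ∫ τ in (0:ℝ)..t, 1 / (1+τ)^2 * w0 L τ ≤ w0 L t / L := by
  have h := intervalIntegral.integral_eq_sub_of_hasDerivAt_of_le (a := 0) (b := t) (f := w0 L)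
    (f' := fun τ => L * (1 / (1+τ)^2 * w0 L τ)) ht.le
    (fun x hx => (w0_deriv L x hx.1).continuousAt.continuousWithinAt)
    (fun x hx => w0_deriv L x hx.1.le) ((w0_ii L t ht).const_mul L)
  rw [intervalIntegral.integral_const_mul] at h
  have h0 : 0 < w0 L 0 := Real.exp_pos _
  rw [le_div_iff₀ hL, mul_comm]
  linarith

lemma young (ε u q : ℝ) (hε : 0 < ε) (hu : 0 < u) (hq : 0 ≤ q) :
    u ^ (-(1:ℝ)/2) * q ≤ ε * u ^ (-(3/4:ℝ)) + q^3 / ε^2 := by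
  set v := u ^ (-(1/4:ℝ)) with hv
  have hv0 : 0 < v := by positivity
  have e1 : u ^ (-(1:ℝ)/2) = v^2 := by
    rw [hv, ← Real.rpow_natCast, ← Real.rpow_mul hu.le]; norm_num
  have e2 : u ^ (-(3/4:ℝ)) = v^3 := by
    rw [hv, ← Real.rpow_natCast, ← Real.rpow_mul hu.le]; norm_num
  rw [e1, e2]
  rcases le_total q (ε * v) with h | h
  · have : v^2 * q ≤ v^2 * (ε*v) := by gcongr
    have : 0 ≤ q^3/ε^2 := by positivity
    nlinarith
  · have h2 : v ≤ q/ε := by rw [le_div_iff₀ hε]; linarith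
    have : v^2 * q ≤ (q/ε)^2 * q := by gcongr
    have h3 : (q/ε)^2 * q = q^3/ε^2 := by field_simp
    have : 0 ≤ ε * v^3 := by positivity
    linarith

lemma Qex_pos (t : ℝ) : 0 < Qex t := by
  unfold Qex; split_ifs with h
  · norm_num
  · have : 0 < t := by linarith
    positivity

lemma Qex_le (t : ℝ) : Qex t ≤ 1000 := by
  unfold Qex; split_ifs with h
  · exact le_rfl
  · have : 0 < t := by linarith
    rw [div_le_iff₀ this]; linarith

lemma Qex_le2 (t : ℝ) (ht : 0 < t) : Qex t * (1+t) ≤ 2000000 := by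
  unfold Qex; split_ifs with h
  · linarith
  · rw [div_mul_eq_mul_div, div_le_iff₀ ht]; linarith

lemma Qex_cont : Continuous Qex := by
  have : Qex = fun t => 1000^2 / max t 1000 := by
    funext t; unfold Qex; split_ifs with h
    · rw [max_eq_right h]; norm_num
    · rw [max_eq_left (by linarith)]
  rw [this]
  refine continuous_const.div (by fun_prop) fun t => ?_
  have : 0 < max t 1000 := lt_max_of_lt_right (by norm_num)
  exact this.ne'

lemma Qex_cube (t : ℝ) (ht : 0 < t) : Qex t ^ 3 ≤ 4*10^15 * (1 / (1+t)^2) := by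
  rw [mul_one_div, le_div_iff₀ (by positivity)]
  have h1 := Qex_le2 t ht
  have h2 := Qex_le t
  have h3 := (Qex_pos t).le
  have h4 : (Qex t * (1+t))^2 ≤ 2000000^2 := pow_le_pow_left₀ (by positivity) h1 2
  calc Qex t ^ 3 * (1+t)^2 = Qex t * (Qex t * (1+t))^2 := by ring
    _ ≤ 1000 * 2000000^2 := by gcongr
    _ ≤ _ := by norm_num

lemma contr : ∃ L : ℝ, 0 < L ∧ ∀ (F : ℝ → ℝ) (D : ℝ), 0 ≤ D →
    (∀ τ, 0 < τ → |F τ| ≤ Qex τ * (D * w0 L τ)) → ∀ t, 0 < t → |VF F t| ≤ 1/2 * (D * w0 L t) := by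
  set M := Mk (3/4) with hM
  have hM0 : 0 ≤ M := Mk_nonneg _
  set ε : ℝ := 1 / (12 * (M+1)) with hε
  have hε0 : 0 < ε := by positivity
  set B : ℝ := 2 * (4*10^15) / ε^2 with hB
  have hB0 : 0 < B := by positivity
  refine ⟨4*B, by positivity, fun F D hD hF t ht => ?_⟩
  set L := 4*B with hL
  have hL0 : 0 < L := by positivity
  have hwt : 0 < w0 L t := Real.exp_pos _
  have i1 := hk3_ii (3/4) (by norm_num) (by norm_num) t ht
  have i2 := w0_ii L t ht
  refine (VF_bound F (fun τ => D * w0 L t * ε * (hk (3/4) τ + 2 * hk (3/4) (t-τ))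
    + D * B * (1 / (1+τ)^2 * w0 L τ)) t ht ((i1.const_mul _).add (i2.const_mul _)) ?_).trans ?_
  · intro τ h0 h1
    have hs : 0 < t - τ := by linarith
    set s := t - τ with hsdef
    have hw : 0 < w0 L τ := Real.exp_pos _
    set r := w0 L τ / w0 L t with hr
    have hr0 : 0 < r := by positivity
    have hr1 : r ≤ 1 := by
      rw [hr, div_le_one hwt]; exact w0_mono L hL0 τ t h0.le h1.le
    have hwr : w0 L τ = r * w0 L t := by rw [hr]; field_simp
    have hQ := Qex_pos τ
    set q := Qex τ * r with hq
    have hq0 : 0 ≤ q := by positivity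
    have hq3 : q^3 ≤ 4*10^15 * (1 / (1+τ)^2) * r := by
      have a1 : r^3 ≤ r := by
        calc r^3 ≤ r^1 := pow_le_pow_of_le_one hr0.le hr1 (by norm_num)
          _ = r := pow_one r
      calc q^3 = Qex τ^3 * r^3 := by rw [hq]; ring
        _ ≤ 4*10^15 * (1 / (1+τ)^2) * r := mul_le_mul (Qex_cube τ h0) a1 (by positivity) (by positivity)
    have y1 := young ε τ q hε0 h0 hq0
    have y2 := young ε s q hε0 hs hq0
    have pt := hk_pt (3/4) (by norm_num) τ s h0 hs
    have main : (τ ^ (-(1:ℝ)/2) + s ^ (-(1:ℝ)/2)) / (1 + s) * q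
        ≤ ε * (hk (3/4) τ + 2 * hk (3/4) s) + B * (1 / (1+τ)^2) * r := by
      calc (τ ^ (-(1:ℝ)/2) + s ^ (-(1:ℝ)/2)) / (1 + s) * q
          = (τ ^ (-(1:ℝ)/2) * q + s ^ (-(1:ℝ)/2) * q) / (1+s) := by ring
        _ ≤ (ε * (τ ^ (-(3/4:ℝ)) + s ^ (-(3/4:ℝ))) + 2 * (q^3/ε^2)) / (1+s) := by
            refine div_le_div_of_nonneg_right ?_ (by linarith)
            linarith
        _ = ε * ((τ ^ (-(3/4:ℝ)) + s ^ (-(3/4:ℝ))) / (1+s)) + 2 * (q^3/ε^2) / (1+s) := by ring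
        _ ≤ ε * (hk (3/4) τ + 2 * hk (3/4) s) + 2 * (q^3/ε^2) := by
            refine add_le_add (mul_le_mul_of_nonneg_left pt hε0.le) ?_
            exact div_le_self (by positivity) (by linarith)
        _ ≤ ε * (hk (3/4) τ + 2 * hk (3/4) s) + 2 * ((4*10^15 * (1 / (1+τ)^2) * r)/ε^2) := by
            gcongr
        _ = _ := by rw [hB]; ring
    calc (τ ^ (-(1:ℝ)/2) + s ^ (-(1:ℝ)/2)) / (1 + s) * |F τ|
        ≤ (τ ^ (-(1:ℝ)/2) + s ^ (-(1:ℝ)/2)) / (1 + s) * (Qex τ * (D * w0 L τ)) :=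
          mul_le_mul_of_nonneg_left (hF τ h0) (by positivity)
      _ = (D * w0 L t) * ((τ ^ (-(1:ℝ)/2) + s ^ (-(1:ℝ)/2)) / (1 + s) * q) := by rw [hwr, hq]; ring
      _ ≤ (D * w0 L t) * (ε * (hk (3/4) τ + 2 * hk (3/4) s) + B * (1 / (1+τ)^2) * r) :=
          mul_le_mul_of_nonneg_left main (by positivity)
      _ = _ := by rw [hwr]; ring
  · rw [intervalIntegral.integral_add (i1.const_mul _) (i2.const_mul _),
      intervalIntegral.integral_const_mul, intervalIntegral.integral_const_mul]
    have b1 := hk3_le (3/4) (by norm_num) (by norm_num) t ht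
    have b2 := w0_integral L t hL0 ht
    have c1 : D * w0 L t * ε * (∫ τ in (0:ℝ)..t, (hk (3/4) τ + 2 * hk (3/4) (t-τ)))
        ≤ D * w0 L t * ε * (3 * M) := mul_le_mul_of_nonneg_left b1 (by positivity)
    have c2 : D * B * (∫ τ in (0:ℝ)..t, 1 / (1+τ)^2 * w0 L τ) ≤ D * B * (w0 L t / L) :=
      mul_le_mul_of_nonneg_left b2 (by positivity)
    have c3 : ε * (3 * M) ≤ 1/4 := by
      rw [hε, div_mul_eq_mul_div, div_le_iff₀ (by positivity)]; linarith
    have c4 : D * B * (w0 L t / L) = D * w0 L t * (1/4) := by rw [hL]; field_simp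
    have c5 : D * w0 L t * (ε * (3 * M)) ≤ D * w0 L t * (1/4) :=
      mul_le_mul_of_nonneg_left c3 (by positivity)
    linarith

noncomputable def Wt (L t : ℝ) : ℝ := w0 L (max t 0)

lemma Wt_cont (L : ℝ) : Continuous (Wt L) := by
  unfold Wt w0
  refine Real.continuous_exp.comp (continuous_const.div (by fun_prop) fun t => ?_)
  have : 0 ≤ max t 0 := le_max_right _ _
  positivity

lemma Wt_pos (L t : ℝ) : 0 < Wt L t := Real.exp_pos _

lemma Wt_le (L t : ℝ) (hL : 0 < L) : Wt L t ≤ 1 := by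
  unfold Wt w0
  have : 0 ≤ max t 0 := le_max_right _ _
  rw [Real.exp_le_one_iff, neg_div]
  have : 0 ≤ L / (1 + max t 0) := by positivity
  linarith

lemma Wt_ge (L t : ℝ) (hL : 0 < L) : Real.exp (-L) ≤ Wt L t := by
  have h : 0 ≤ max t 0 := le_max_right _ _
  have := w0_mono L hL 0 (max t 0) le_rfl h
  have e : w0 L 0 = Real.exp (-L) := by unfold w0; simp
  rw [e] at this; exact this

noncomputable def gt (τ : ℝ) : ℝ := √τ / (1 + √τ)

lemma gt_cont : Continuous gt := by
  unfold gt
  refine Real.continuous_sqrt.div (by fun_prop) fun t => ?_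
  positivity

lemma gt_bd (t : ℝ) : |gt t| ≤ 1 := by
  unfold gt
  rw [abs_of_nonneg (by positivity), div_le_one (by positivity)]; linarith

noncomputable def FF (y : ℝ → ℝ) (τ : ℝ) : ℝ := Qex τ * y τ + gt τ

lemma FF_cont (y : ℝ → ℝ) (hy : Continuous y) : Continuous (FF y) :=
  (Qex_cont.mul hy).add gt_cont

lemma FF_bd (y : ℝ → ℝ) (C : ℝ) (hC : ∀ t, |y t| ≤ C) (t : ℝ) : |FF y t| ≤ 1000 * C + 1 := by
  unfold FF
  refine (abs_add_le _ _).trans (add_le_add ?_ (gt_bd t))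
  rw [abs_mul, abs_of_pos (Qex_pos t)]
  exact mul_le_mul (Qex_le t) (hC t) (abs_nonneg _) (by norm_num)

lemma VF_FF_sub (y z : ℝ → ℝ) (hy : Continuous y) (hz : Continuous z) (C D : ℝ)
    (hC : ∀ t, |y t| ≤ C) (hD : ∀ t, |z t| ≤ D) (t : ℝ) :
    VF (FF y) t - VF (FF z) t = VF (fun t => Qex t * (y t - z t)) t := by
  rw [VF_sub _ _ (FF_cont y hy) (FF_cont z hz) _ (FF_bd y C hC) _ (FF_bd z D hD)]
  congr 1; funext τ; unfold FF; ring

lemma exists_fix (x₀ : ℝ) : ∃ y : ℝ → ℝ, Continuous y ∧ (∃ C, ∀ t, |y t| ≤ C) ∧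
    ∀ t, y t = eML t * x₀ + VF (FF y) t := by
  obtain ⟨L, hL, hcon⟩ := contr
  have hyc : ∀ z : BoundedContinuousFunction ℝ ℝ, Continuous (fun t => Wt L t * z t) :=
    fun z => (Wt_cont L).mul z.continuous
  have hyb : ∀ z : BoundedContinuousFunction ℝ ℝ, ∀ t, |Wt L t * z t| ≤ ‖z‖ := by
    intro z t
    rw [abs_mul, abs_of_pos (Wt_pos L t)]
    calc _ ≤ 1 * ‖z‖ := mul_le_mul (Wt_le L t hL) (z.norm_coe_le_norm t) (abs_nonneg _) zero_le_one
      _ = _ := one_mul _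
  let S : BoundedContinuousFunction ℝ ℝ → BoundedContinuousFunction ℝ ℝ := fun z =>
    BoundedContinuousFunction.ofNormedAddCommGroup
      (fun t => (eML t * x₀ + VF (FF (fun t => Wt L t * z t)) t) / Wt L t)
      (((eML_cont.mul continuous_const).add
        (VF_cont _ (FF_cont _ (hyc z)) _ (FF_bd _ _ (hyb z)))).div (Wt_cont L) fun t => (Wt_pos L t).ne')
      ((|x₀| + (1000 * ‖z‖ + 1) * (3 * Mk (1/2))) / Real.exp (-L))
      (by
        intro t
        rw [Real.norm_eq_abs, abs_div, abs_of_pos (Wt_pos L t)]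
        have hM := Mk_nonneg (1/2)
        refine div_le_div₀ (by positivity) ?_ (Real.exp_pos _) (Wt_ge L t hL)
        refine (abs_add_le _ _).trans (add_le_add ?_ (VF_bdd _ _ (FF_bd _ _ (hyb z)) t))
        rw [abs_mul]
        exact mul_le_of_le_one_left (abs_nonneg _) (eML_bound1 t))
  have hS : ∀ z t, S z t = (eML t * x₀ + VF (FF (fun t => Wt L t * z t)) t) / Wt L t :=
    fun z t => rfl
  have hcw : ContractingWith (1/2 : NNReal) S := by
    refine ⟨by norm_num [← NNReal.coe_lt_coe], LipschitzWith.of_dist_le_mul fun z1 z2 => ?_⟩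
    rw [BoundedContinuousFunction.dist_le (by positivity)]
    intro t
    rw [hS, hS, Real.dist_eq, ← sub_div, add_sub_add_left_eq_sub,
      VF_FF_sub _ _ (hyc z1) (hyc z2) _ _ (hyb z1) (hyb z2), abs_div, abs_of_pos (Wt_pos L t),
      div_le_iff₀ (Wt_pos L t)]
    have hc : (((1/2 : NNReal)) : ℝ) = 1/2 := by norm_num
    rw [hc]
    have hW := Wt_pos L t
    rcases le_or_gt t 0 with ht | ht
    · rw [VF_nonpos _ t ht, abs_zero]; positivity
    · have e : Wt L t = w0 L t := by unfold Wt; rw [max_eq_left ht.le]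
      rw [e, mul_assoc]
      refine hcon _ (dist z1 z2) dist_nonneg ?_ t ht
      intro τ hτ
      have e' : Wt L τ = w0 L τ := by unfold Wt; rw [max_eq_left hτ.le]
      have hd : |z1 τ - z2 τ| ≤ dist z1 z2 := by
        rw [← Real.dist_eq]; exact BoundedContinuousFunction.dist_coe_le_dist τ
      rw [abs_mul, abs_of_pos (Qex_pos τ), ← mul_sub, abs_mul, abs_of_pos (Wt_pos L τ), e', mul_comm (dist z1 z2)]
      have h1 := Qex_pos τ
      have h2 : 0 < w0 L τ := Real.exp_pos _
      gcongr
  set z := ContractingWith.fixedPoint S hcw with hz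
  have hfix : S z = z := hcw.fixedPoint_isFixedPt
  refine ⟨fun t => Wt L t * z t, hyc z, ⟨‖z‖, hyb z⟩, fun t => ?_⟩
  have h := hS z t
  rw [hfix, eq_div_iff (Wt_pos L t).ne'] at h
  simp only
  rw [mul_comm]; exact h

lemma uniq_fix (x₀ : ℝ) (y z : ℝ → ℝ) (hy : Continuous y) (hz : Continuous z) (C D : ℝ)
    (hC : ∀ t, |y t| ≤ C) (hD : ∀ t, |z t| ≤ D)
    (ey : ∀ t > 0, y t = eML t * x₀ + VF (FF y) t)
    (ez : ∀ t > 0, z t = eML t * x₀ + VF (FF z) t) : ∀ t > 0, y t = z t := by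
  obtain ⟨L, hL, hcon⟩ := contr
  have hC0 : 0 ≤ C := (abs_nonneg _).trans (hC 0)
  have hD0 : 0 ≤ D := (abs_nonneg _).trans (hD 0)
  set A := (C + D) * Real.exp L with hA
  have hA0 : 0 ≤ A := by positivity
  have key : ∀ n : ℕ, ∀ t > 0, |y t - z t| ≤ ((1/2)^n * A) * w0 L t := by
    intro n
    induction n with
    | zero =>
      intro t ht
      have e : Wt L t = w0 L t := by unfold Wt; rw [max_eq_left ht.le]
      have h1 := Wt_ge L t hL
      rw [e] at h1
      have h2 : |y t - z t| ≤ C + D := (abs_sub _ _).trans (add_le_add (hC t) (hD t))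
      calc _ ≤ C + D := h2
        _ = A * Real.exp (-L) := by rw [hA, mul_assoc, ← Real.exp_add]; simp
        _ ≤ A * w0 L t := by gcongr
        _ = _ := by simp
    | succ n ih =>
      intro t ht
      have e : y t - z t = VF (fun t => Qex t * (y t - z t)) t := by
        rw [← VF_FF_sub y z hy hz C D hC hD, ey t ht, ez t ht]; ring
      rw [e]
      have := hcon (fun t => Qex t * (y t - z t)) ((1/2)^n * A) (by positivity) ?_ t ht
      · refine this.trans (le_of_eq ?_); ring
      · intro τ hτ
        rw [abs_mul, abs_of_pos (Qex_pos τ)]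
        exact mul_le_mul_of_nonneg_left (ih τ hτ) (Qex_pos τ).le
  intro t ht
  have hl : Tendsto (fun n : ℕ => ((1/2:ℝ)^n * A) * w0 L t) atTop (𝓝 0) := by
    have := ((tendsto_pow_atTop_nhds_zero_of_lt_one (r := (1/2:ℝ)) (by norm_num) (by norm_num)).mul_const A).mul_const (w0 L t)
    simpa using this
  have : |y t - z t| ≤ 0 := ge_of_tendsto' hl fun n => key n t ht
  have := abs_nonpos_iff.1 this
  linarith

/-- translation of the integral equation -/
lemma eqn_iff (x₀ : ℝ) (φ y : ℝ → ℝ) (h : ∀ t > 0, y t = √t * φ t) (t : ℝ) (ht : 0 < t) :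
    (φ t = t ^ (-(1:ℝ)/2) * mlScalar (1/2) (1/2) (-t ^ ((1:ℝ)/2)) * x₀
          + ∫ τ in (0:ℝ)..t, (t - τ) ^ (-(1:ℝ)/2) * mlScalar (1/2) (1/2) (-(t - τ) ^ ((1:ℝ)/2))
              * (Qex τ * φ τ + 1 / (1 + τ ^ ((1:ℝ)/2)))) ↔
    y t = eML t * x₀ + VF (FF y) t := by
  have hI : (∫ τ in (0:ℝ)..t, (t - τ) ^ (-(1:ℝ)/2) * mlScalar (1/2) (1/2) (-(t - τ) ^ ((1:ℝ)/2))
              * (Qex τ * φ τ + 1 / (1 + τ ^ ((1:ℝ)/2))))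
      = ∫ τ in (0:ℝ)..t, (t-τ) ^ (-(1:ℝ)/2) * eML (t-τ) * (τ ^ (-(1:ℝ)/2) * FF y τ) := by
    refine intervalIntegral.integral_congr_ae (Eventually.of_forall fun τ hτ => ?_)
    rw [Set.uIoc_of_le ht.le] at hτ
    have h0 : 0 < τ := hτ.1
    unfold eML FF gt
    rw [h τ h0, ← Real.sqrt_eq_rpow, ← Real.sqrt_eq_rpow]
    congr 1
    have h1 := sqrt_mul_rpow τ h0
    have h2 : 1 / (1 + √τ) = τ ^ (-(1:ℝ)/2) * (√τ / (1 + √τ)) := by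
      rw [← mul_div_assoc, mul_comm, h1]
    rw [h2]
    linear_combination (-(Qex τ * φ τ)) * h1
  rw [hI, VF_eq _ t ht, h t ht, ← Real.sqrt_eq_rpow]
  change _ = _ * eML t * x₀ + _ ↔ _
  have hs : √t ≠ 0 := (Real.sqrt_pos.2 ht).ne'
  have h1 := sqrt_mul_rpow t ht
  constructor
  · intro hh
    rw [hh]
    linear_combination (eML t * x₀) * h1
  · intro hh
    apply mul_left_cancel₀ hs
    rw [hh]
    linear_combination (-(eML t * x₀)) * h1

theorem stmt16 :
    ∀ x₀ : ℝ, ∃ φ : ℝ → ℝ,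
      memC0half φ ∧
      (∀ t > (0:ℝ),
        φ t = t ^ (-(1:ℝ)/2) * mlScalar (1/2) (1/2) (-t ^ ((1:ℝ)/2)) * x₀
          + ∫ τ in (0:ℝ)..t, (t - τ) ^ (-(1:ℝ)/2) * mlScalar (1/2) (1/2) (-(t - τ) ^ ((1:ℝ)/2))
              * (Qex τ * φ τ + 1 / (1 + τ ^ ((1:ℝ)/2)))) ∧
      (∀ ψ : ℝ → ℝ, memC0half ψ →
        (∀ t > (0:ℝ),
          ψ t = t ^ (-(1:ℝ)/2) * mlScalar (1/2) (1/2) (-t ^ ((1:ℝ)/2)) * x₀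
            + ∫ τ in (0:ℝ)..t, (t - τ) ^ (-(1:ℝ)/2) * mlScalar (1/2) (1/2) (-(t - τ) ^ ((1:ℝ)/2))
                * (Qex τ * ψ τ + 1 / (1 + τ ^ ((1:ℝ)/2)))) →
        ∀ t > (0:ℝ), ψ t = φ t) ∧
      Tendsto φ atTop (𝓝 0) := by
  intro x₀
  obtain ⟨y, hyc, ⟨C, hC⟩, hy⟩ := exists_fix x₀
  have hrel : ∀ t > 0, y t = √t * (t ^ (-(1:ℝ)/2) * y t) := by
    intro t ht
    rw [← mul_assoc, sqrt_mul_rpow t ht, one_mul]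
  have hC0 : 0 ≤ C := (abs_nonneg _).trans (hC 0)
  refine ⟨fun t => t ^ (-(1:ℝ)/2) * y t, ⟨?_, ⟨y 0, ?_⟩, ⟨C, ?_⟩⟩, ?_, ?_, ?_⟩
  · refine ContinuousOn.mul (fun t ht => ?_) hyc.continuousOn
    exact (Real.continuousAt_rpow_const _ _ (Or.inl (ne_of_gt ht))).continuousWithinAt
  · refine Tendsto.congr' ?_ (hyc.continuousAt.tendsto.mono_left nhdsWithin_le_nhds)
    filter_upwards [self_mem_nhdsWithin] with t ht
    rw [← Real.sqrt_eq_rpow]; exact hrel t ht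
  · intro t ht
    rw [← Real.sqrt_eq_rpow]
    rcases ht.eq_or_lt with h0 | h0
    · rw [← h0]; simpa using hC0
    · rw [← abs_of_nonneg (Real.sqrt_nonneg t), ← abs_mul]
      simp only
      rw [← hrel t h0]
      exact hC t
  · intro t ht
    exact (eqn_iff x₀ _ y hrel t ht).2 (hy t)
  · rintro ψ ⟨hψc, ⟨l, hl⟩, ⟨D, hD⟩⟩ hψ t ht
    simp only [← Real.sqrt_eq_rpow] at hl hD
    set z : ℝ → ℝ := fun t => if t ≤ 0 then l else √t * ψ t with hzdef
    have hz1 : ∀ t > 0, z t = √t * ψ t := fun t ht => if_neg (not_le.2 ht)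
    have hz0 : ∀ t ≤ 0, z t = l := fun t ht => if_pos ht
    have hlim : Tendsto z (𝓝[>] 0) (𝓝 l) := by
      refine hl.congr' ?_
      filter_upwards [self_mem_nhdsWithin] with t ht using (hz1 t ht).symm
    have hzc : Continuous z := by
      rw [continuous_iff_continuousAt]
      intro s
      rcases lt_trichotomy s 0 with hs | hs | hs
      · have : z =ᶠ[𝓝 s] fun _ => l := by
          filter_upwards [Iio_mem_nhds hs] with u hu using hz0 u (le_of_lt hu)
        exact continuousAt_const.congr this.symm
      · subst hs
        rw [continuousAt_iff_continuous_left'_right']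
        constructor
        · have : Tendsto z (𝓝[<] 0) (𝓝 l) := by
            refine tendsto_const_nhds.congr' ?_
            filter_upwards [self_mem_nhdsWithin] with u hu using (hz0 u (le_of_lt hu)).symm
          rw [ContinuousWithinAt, hz0 0 le_rfl]; exact this
        · rw [ContinuousWithinAt, hz0 0 le_rfl]; exact hlim
      · have h1 : (fun u => √u * ψ u) =ᶠ[𝓝 s] z := by
          filter_upwards [Ioi_mem_nhds hs] with u hu using (hz1 u hu).symm
        refine ContinuousAt.congr ?_ h1
        exact Real.continuous_sqrt.continuousAt.mul (hψc.continuousAt (Ioi_mem_nhds hs))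
    have hzb : ∀ t, |z t| ≤ max D |l| := by
      intro s
      rcases le_or_gt s 0 with hs | hs
      · rw [hz0 s hs]; exact le_max_right _ _
      · rw [hz1 s hs, abs_mul, abs_of_nonneg (Real.sqrt_nonneg s)]
        exact (hD s hs.le).trans (le_max_left _ _)
    have := uniq_fix x₀ z y hzc hyc _ _ hzb hC
      (fun t ht => (eqn_iff x₀ ψ z hz1 t ht).1 (hψ t ht)) (fun t _ => hy t) t ht
    rw [hz1 t ht, hrel t ht] at this
    exact mul_left_cancel₀ (Real.sqrt_pos.2 ht).ne' this
  · have h2 : Tendsto (fun s : ℝ => s ^ (-(1:ℝ)/2)) atTop (𝓝 0) := by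
      have := tendsto_rpow_neg_atTop (y := 1/2) (by norm_num)
      convert this using 3; norm_num
    exact bdd_le_mul_tendsto_zero' C (Eventually.of_forall hC) h2 |>.congr fun t => mul_comm _ _
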